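/- Let N ≥ 2, s ∈ (0,1), let B ⊂ ℝ^N be an open ball centered at the origin, and let e ∈ 𝕊^{N−1}. If u and v are continuous first nontrivial eigenfunctions on B satisfying u∘σ_e = −u and v∘σ_e = −v (antisymmetry with respect to the hyperplane {x·e = 0}), then u and v are proportional: there exists c ∈ ℝ, c ≠ 0, with v = c·u in ℝ^N. In other words, for any e ∈ 𝕊^{N−1} there is at most one, modulo scaling, first nontrivial eigenfunction antisymmetric with respect to {x·e = 0}. -/

import Mathlib

open MeasureTheory Filter Topology Bornology Set
open scoped ENNReal NNReal

noncomputable section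

namespace FracNeumann

abbrev Euc (N : ℕ) : Type := EuclideanSpace ℝ (Fin N)

/-- The kernel weight `|x - y| ^ (N + 2s)`. -/
def kern (N : ℕ) (s : ℝ) (x y : Euc N) : ℝ := ‖x - y‖ ^ ((N : ℝ) + 2 * s)

/-- The region `ℝ^{2N} \ (Ω^c × Ω^c)`, where `Ω^c := ℝ^N \ closure Ω`. -/
def reg (N : ℕ) (Ω : Set (Euc N)) : Set (Euc N × Euc N) :=
  {q | q.1 ∈ closure Ω ∨ q.2 ∈ closure Ω}

/-- The squared seminorm `[u]_{H^s_{Ω,0}}²`, as an extended real number. -/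
def semiSq (N : ℕ) (s : ℝ) (Ω : Set (Euc N)) (u : Euc N → ℝ) : ℝ≥0∞ :=
  ∫⁻ q in reg N Ω, ENNReal.ofReal ((u q.1 - u q.2) ^ 2 / kern N s q.1 q.2)

/-- `∫_Ω u²`, as an extended real number. -/
def l2sq (N : ℕ) (Ω : Set (Euc N)) (u : Euc N → ℝ) : ℝ≥0∞ :=
  ∫⁻ x in Ω, ENNReal.ofReal ((u x) ^ 2)

/-- Membership in `H^s_{Ω,0}`. -/
def memHs (N : ℕ) (s : ℝ) (Ω : Set (Euc N)) (u : Euc N → ℝ) : Prop :=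
  Measurable u ∧ l2sq N Ω u < ⊤ ∧ semiSq N s Ω u < ⊤

/-- The squared Gagliardo seminorm `[u]_{H^s(Ω)}²`. -/
def semiSqOn (N : ℕ) (s : ℝ) (Ω : Set (Euc N)) (u : Euc N → ℝ) : ℝ≥0∞ :=
  ∫⁻ q in Ω ×ˢ Ω, ENNReal.ofReal ((u q.1 - u q.2) ^ 2 / kern N s q.1 q.2)

/-- Membership in `H^s(Ω)` (for functions defined on all of `ℝ^N`). -/
def memHsOn (N : ℕ) (s : ℝ) (Ω : Set (Euc N)) (u : Euc N → ℝ) : Prop :=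
  Measurable u ∧ l2sq N Ω u < ⊤ ∧ semiSqOn N s Ω u < ⊤

/-- The normalizing constant `c_{N,s}` of the fractional Laplacian. -/
def cNs (N : ℕ) (s : ℝ) : ℝ :=
  (4 : ℝ) ^ s * s * Real.Gamma ((N : ℝ) / 2 + s) /
    (Real.pi ^ ((N : ℝ) / 2) * Real.Gamma (1 - s))

/-- The nonlocal Neumann derivative `𝒩_s u`. -/
def Nneu (N : ℕ) (s : ℝ) (Ω : Set (Euc N)) (u : Euc N → ℝ) (x : Euc N) : ℝ :=
  cNs N s * ∫ y in Ω, (u x - u y) / kern N s x y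

/-- Membership in `H̃^s_{Ω,0}`: members of `H^s_{Ω,0}` with `𝒩_s u = 0` a.e. in `Ω^c`. -/
def memHsTilde (N : ℕ) (s : ℝ) (Ω : Set (Euc N)) (u : Euc N → ℝ) : Prop :=
  memHs N s Ω u ∧ ∀ᵐ x ∂(volume.restrict (closure Ω)ᶜ), Nneu N s Ω u x = 0

/-- The first nontrivial Neumann eigenvalue `μ₁^{(s)}(Ω)`. -/
def mu1 (N : ℕ) (s : ℝ) (Ω : Set (Euc N)) : ℝ :=
  sInf {t : ℝ | ∃ u : Euc N → ℝ, memHs N s Ω u ∧ (∫ x in Ω, (u x) ^ 2) = 1 ∧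
    (∫ x in Ω, u x) = 0 ∧ t = cNs N s / 2 * (semiSq N s Ω u).toReal}

/-- The bilinear form (without the constant). -/
def bform (N : ℕ) (s : ℝ) (Ω : Set (Euc N)) (u v : Euc N → ℝ) : ℝ :=
  ∫ q in reg N Ω, (u q.1 - u q.2) * (v q.1 - v q.2) / kern N s q.1 q.2

/-- First nontrivial eigenfunction: weak solution associated to `μ₁^{(s)}(Ω)`. -/
def IsFirstEigen (N : ℕ) (s : ℝ) (Ω : Set (Euc N)) (u : Euc N → ℝ) : Prop :=
  memHs N s Ω u ∧ ¬ (u =ᵐ[volume.restrict Ω] 0) ∧ (∫ x in Ω, u x) = 0 ∧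
    ∀ v : Euc N → ℝ, memHs N s Ω v →
      cNs N s / 2 * bform N s Ω u v = mu1 N s Ω * ∫ x in Ω, u x * v x

/-- Reflection `σ_e(x) = x - 2(x·e)e` across the hyperplane `{x·e = 0}`. -/
def reflect (N : ℕ) (e x : Euc N) : Euc N := x - (2 * (inner ℝ x e : ℝ)) • e

/-- The polarization `P_e u` with respect to the hyperplane `{x·e = 0}`. -/
def polarize (N : ℕ) (e : Euc N) (u : Euc N → ℝ) (x : Euc N) : ℝ :=
  if 0 ≤ (inner ℝ x e : ℝ) then min (u x) (u (reflect N e x))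
  else max (u x) (u (reflect N e x))

/-- Foliated Schwarz symmetry with respect to `p`. -/
def FoliatedSchwarz (N : ℕ) (p : Euc N) (u : Euc N → ℝ) : Prop :=
  ∃ uh : ℝ → ℝ → ℝ, (∀ r : ℝ, AntitoneOn (uh r) (Icc 0 Real.pi)) ∧
    ∀ x : Euc N, x ≠ 0 → u x = uh ‖x‖ (Real.arccos ((inner ℝ x p : ℝ) / ‖x‖))

/-- Radial symmetry (pointwise). -/
def Radial (N : ℕ) (u : Euc N → ℝ) : Prop := ∃ f : ℝ → ℝ, ∀ x, u x = f ‖x‖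

/-- Radial symmetry (a.e.). -/
def RadialAE (N : ℕ) (u : Euc N → ℝ) : Prop :=
  ∃ f : ℝ → ℝ, ∀ᵐ x : Euc N ∂volume, u x = f ‖x‖

/-- The set `{x ∈ Ω : u x ≠ 0}` has exactly two connected components. -/
def TwoNodal (N : ℕ) (Ω : Set (Euc N)) (u : Euc N → ℝ) : Prop :=
  Nat.card (ConnectedComponents {x : Euc N // x ∈ Ω ∧ u x ≠ 0}) = 2

/-- Bounded Lipschitz domain: open, bounded, connected, and near every boundary point the set
is the region above the graph of a Lipschitz function in some direction `e`. -/
def IsLipschitzDomain (N : ℕ) (Ω : Set (Euc N)) : Prop :=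
  IsOpen Ω ∧ IsBounded Ω ∧ IsConnected Ω ∧
    ∀ x ∈ frontier Ω, ∃ e : Euc N, ‖e‖ = 1 ∧ ∃ r : ℝ, 0 < r ∧
      ∃ (L : NNReal) (f : Euc N → ℝ), LipschitzWith L f ∧
        ∀ y ∈ Metric.ball x r,
          (y ∈ Ω ↔ f (y - ((inner ℝ y e : ℝ)) • e) < (inner ℝ y e : ℝ))

/-- `g` is a weak gradient of `u` in `Ω`, square-integrable on `Ω`. -/
def IsWeakGradient (N : ℕ) (Ω : Set (Euc N)) (u : Euc N → ℝ) (g : Euc N → Euc N) : Prop :=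
  Measurable g ∧ (∫⁻ x in Ω, ENNReal.ofReal (‖g x‖ ^ 2)) < ⊤ ∧
    ∀ φ : Euc N → ℝ, ContDiff ℝ (⊤ : ℕ∞) φ → HasCompactSupport φ → tsupport φ ⊆ Ω →
      ∀ i : Fin N, (∫ x in Ω, u x * fderiv ℝ φ x (EuclideanSpace.single i 1)) =
        - ∫ x in Ω, g x i * φ x

/-- Membership in `H¹(Ω)`. -/
def memH1 (N : ℕ) (Ω : Set (Euc N)) (u : Euc N → ℝ) : Prop :=
  Measurable u ∧ l2sq N Ω u < ⊤ ∧ ∃ g, IsWeakGradient N Ω u g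

/-- `∫_Ω |∇u|²`, as an extended real number. -/
def gradSq (N : ℕ) (Ω : Set (Euc N)) (u : Euc N → ℝ) : ℝ≥0∞ :=
  ⨅ (g : Euc N → Euc N) (_ : IsWeakGradient N Ω u g), ∫⁻ x in Ω, ENNReal.ofReal (‖g x‖ ^ 2)

/-- Rayleigh quotient for the fractional Neumann problem. -/
def rayleighS (N : ℕ) (s : ℝ) (Ω : Set (Euc N)) (u : Euc N → ℝ) : ℝ≥0∞ :=
  ENNReal.ofReal (cNs N s / 2) * semiSq N s Ω u / l2sq N Ω u

/-- Rayleigh quotient for the local Neumann problem. -/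
def rayleigh1 (N : ℕ) (Ω : Set (Euc N)) (u : Euc N → ℝ) : ℝ≥0∞ :=
  gradSq N Ω u / l2sq N Ω u

/-- The min-max value `μ_n^{(s)}(Ω)` over `n`-dimensional subspaces of `H^s_{Ω,0} ∩ L²₀(Ω)`. -/
def muNs (N : ℕ) (s : ℝ) (Ω : Set (Euc N)) (n : ℕ) : ℝ≥0∞ :=
  ⨅ (A : Submodule ℝ (Euc N → ℝ)) (_ : Module.finrank ℝ A = n ∧
      (∀ u ∈ A, memHs N s Ω u ∧ (∫ x in Ω, u x) = 0) ∧
      (∀ u ∈ A, u =ᵐ[(volume : Measure (Euc N))] 0 → u = 0)),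
    ⨆ (u : Euc N → ℝ) (_ : u ∈ A ∧ u ≠ 0), rayleighS N s Ω u

/-- The min-max value over `n`-dimensional subspaces of `H̃^s_{Ω,0} ∩ L²₀(Ω)`. -/
def muNsTilde (N : ℕ) (s : ℝ) (Ω : Set (Euc N)) (n : ℕ) : ℝ≥0∞ :=
  ⨅ (A : Submodule ℝ (Euc N → ℝ)) (_ : Module.finrank ℝ A = n ∧
      (∀ u ∈ A, memHsTilde N s Ω u ∧ (∫ x in Ω, u x) = 0) ∧
      (∀ u ∈ A, u =ᵐ[(volume : Measure (Euc N))] 0 → u = 0)),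
    ⨆ (u : Euc N → ℝ) (_ : u ∈ A ∧ u ≠ 0), rayleighS N s Ω u

/-- The min-max value `μ_n^{(1)}(Ω)` over `n`-dimensional subspaces of `H¹(Ω) ∩ L²₀(Ω)`. -/
def muN1 (N : ℕ) (Ω : Set (Euc N)) (n : ℕ) : ℝ≥0∞ :=
  ⨅ (A : Submodule ℝ (Euc N → ℝ)) (_ : Module.finrank ℝ A = n ∧
      (∀ u ∈ A, memH1 N Ω u ∧ (∫ x in Ω, u x) = 0) ∧
      (∀ u ∈ A, u =ᵐ[volume.restrict Ω] 0 → u = 0)),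
    ⨆ (u : Euc N → ℝ) (_ : u ∈ A ∧ u ≠ 0), rayleigh1 N Ω u

/-- `μ_n^{(s)}(Ω)` including `μ₀^{(s)}(Ω) := 0`. -/
def muNsFull (N : ℕ) (s : ℝ) (Ω : Set (Euc N)) (n : ℕ) : ℝ≥0∞ :=
  if n = 0 then 0 else muNs N s Ω n

/-- `μ_n^{(1)}(Ω)` including `μ₀^{(1)}(Ω) := 0`. -/
def muN1Full (N : ℕ) (Ω : Set (Euc N)) (n : ℕ) : ℝ≥0∞ :=
  if n = 0 then 0 else muN1 N Ω n

/-- The squared `H^s_{Ω,0}`-seminorm of the `s`-minimal extension of `u`: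
the minimal value of `[v]²` over `v ∈ H^s_{Ω,0}` with `v = u` a.e. in `Ω`. -/
def minExtSemiSq (N : ℕ) (s : ℝ) (Ω : Set (Euc N)) (u : Euc N → ℝ) : ℝ≥0∞ :=
  ⨅ (v : Euc N → ℝ) (_ : memHs N s Ω v ∧ v =ᵐ[volume.restrict Ω] u), semiSq N s Ω v

/-- `ω_{N-1}`: volume of the unit ball of `ℝ^{N-1}`. -/
def omegaPrev (N : ℕ) : ℝ := (volume (Metric.ball (0 : Euc (N - 1)) 1)).toReal

/-- Membership in `L²₀(Ω)`. -/
def memL20 (N : ℕ) (Ω : Set (Euc N)) (u : Euc N → ℝ) : Prop :=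
  Measurable u ∧ l2sq N Ω u < ⊤ ∧ (∫ x in Ω, u x) = 0

/-- The functional `F_s` (value `+∞` outside `H^s(Ω)`). -/
def Fs (N : ℕ) (s : ℝ) (Ω : Set (Euc N)) (u : Euc N → ℝ) : ℝ≥0∞ :=
  ENNReal.ofReal (1 - s) * minExtSemiSq N s Ω u

/-- The functional `F₁` (value `+∞` outside `H¹(Ω)`). -/
def F1 (N : ℕ) (Ω : Set (Euc N)) (u : Euc N → ℝ) : ℝ≥0∞ :=
  ENNReal.ofReal (omegaPrev N / (2 * N)) * gradSq N Ω u

end FracNeumann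
namespace FracNeumann

/-! Polarizing an antisymmetric function across `{x·e = 0}` does not change its `L²` norm and does
not increase its energy. By minimality of `μ₁` the polarization of an antisymmetric weak solution
has the same energy, and the equality case of the polarization inequality then forces the solution
to have constant sign on the half-space `{x·e > 0}`. This applies to every combination `v - c • u`,
so `c ↦ (v x - c * u x) * (v y - c * u y)` is a nonnegative quadratic polynomial for `x`, `y` in the
half-space. Its discriminant `(v x * u y - u x * v y) ^ 2` is then nonpositive, which is
proportionality. -/

lemma mul_eq_mul_of_forall_sub_mul_nonneg {K : Type*} [Field K] [LinearOrder K]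
    [IsStrictOrderedRing K] {a b a' b' : K}
    (h : ∀ c, 0 ≤ (b - c * a) * (b' - c * a')) : b * a' = a * b' := by
  have hdiscrim : discrim (a * a') (-(b * a' + a * b')) (b * b') ≤ 0 :=
    discrim_le_zero fun c => (h c).trans_eq (by ring)
  have hsq : (b * a' - a * b') ^ 2 ≤ 0 := by
    calc (b * a' - a * b') ^ 2 = discrim (a * a') (-(b * a' + a * b')) (b * b') := by
          rw [discrim]; ring
      _ ≤ 0 := hdiscrim
  exact sub_eq_zero.1 (pow_eq_zero_iff two_ne_zero |>.1 (hsq.antisymm (sq_nonneg _)))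

lemma memLp_two_iff_lintegral_ofReal_sq_lt_top {α : Type*} [MeasurableSpace α] {μ : Measure α}
    {f : α → ℝ} (hf : AEStronglyMeasurable f μ) :
    MemLp f 2 μ ↔ ∫⁻ x, ENNReal.ofReal (f x ^ 2) ∂μ < ⊤ := by
  have hf2 : AEStronglyMeasurable (fun x => f x ^ 2) μ := hf.pow 2
  rw [memLp_two_iff_integrable_sq hf, Integrable, and_iff_right hf2,
    hasFiniteIntegral_iff_ofReal (ae_of_all _ fun _ => sq_nonneg _)]

section Energy

variable {N : ℕ} {s : ℝ} {Ω : Set (Euc N)} {u v w : Euc N → ℝ}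

lemma cNs_pos (N : ℕ) (hs : s ∈ Ioo (0 : ℝ) 1) : 0 < cNs N s := by
  obtain ⟨hs0, hs1⟩ := hs
  have hΓ : 0 < Real.Gamma ((N : ℝ) / 2 + s) := Real.Gamma_pos_of_pos (by positivity)
  have hΓ' : 0 < Real.Gamma (1 - s) := Real.Gamma_pos_of_pos (by linarith)
  exact div_pos (mul_pos (by positivity) hΓ) (mul_pos (by positivity) hΓ')

lemma kern_nonneg (x y : Euc N) : 0 ≤ kern N s x y := Real.rpow_nonneg (norm_nonneg _) _

lemma kern_pos {x y : Euc N} (h : x ≠ y) : 0 < kern N s x y :=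
  Real.rpow_pos_of_pos (norm_pos_iff.2 (sub_ne_zero.2 h)) _

lemma kern_lt_kern_iff (hs : 0 < s) {x y x' y' : Euc N} :
    kern N s x y < kern N s x' y' ↔ ‖x - y‖ ^ 2 < ‖x' - y'‖ ^ 2 := by
  rw [kern, kern, Real.rpow_lt_rpow_iff (norm_nonneg _) (norm_nonneg _) (by positivity),
    sq_lt_sq₀ (norm_nonneg _) (norm_nonneg _)]

lemma measurableSet_reg : MeasurableSet (reg N Ω) :=
  (measurable_fst isClosed_closure.measurableSet).union
    (measurable_snd isClosed_closure.measurableSet)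

/-- The difference quotient `(u x - u y) / |x - y| ^ (N / 2 + s)`. It is linear in `u`, and `u` has
finite energy exactly when it is square-integrable. On the diagonal it is `0`. -/
def diffQuot (s : ℝ) (u : Euc N → ℝ) (q : Euc N × Euc N) : ℝ :=
  (u q.1 - u q.2) / √(kern N s q.1 q.2)

lemma diffQuot_mul_diffQuot (q : Euc N × Euc N) :
    diffQuot s u q * diffQuot s v q = (u q.1 - u q.2) * (v q.1 - v q.2) / kern N s q.1 q.2 := by
  rw [diffQuot, diffQuot, div_mul_div_comm, Real.mul_self_sqrt (kern_nonneg _ _)]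

lemma diffQuot_sq (q : Euc N × Euc N) :
    diffQuot s u q ^ 2 = (u q.1 - u q.2) ^ 2 / kern N s q.1 q.2 := by
  simp only [sq, diffQuot_mul_diffQuot]

lemma diffQuot_zero : diffQuot s (0 : Euc N → ℝ) = 0 := by
  ext q; simp [diffQuot]

lemma diffQuot_add : diffQuot s (u + v) = diffQuot s u + diffQuot s v := by
  ext q; simp only [diffQuot, Pi.add_apply]; ring

lemma diffQuot_smul (c : ℝ) : diffQuot s (c • u) = c • diffQuot s u := by
  ext q; simp only [diffQuot, Pi.smul_apply, smul_eq_mul]; ring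

lemma measurable_diffQuot (hu : Measurable u) : Measurable (diffQuot s u) := by
  unfold diffQuot kern
  fun_prop

lemma semiSq_eq_lintegral_diffQuot_sq :
    semiSq N s Ω u = ∫⁻ q in reg N Ω, ENNReal.ofReal (diffQuot s u q ^ 2) := by
  simp only [semiSq, diffQuot_sq]

lemma bform_eq_integral_diffQuot :
    bform N s Ω u v = ∫ q in reg N Ω, diffQuot s u q * diffQuot s v q := by
  simp only [bform, diffQuot_mul_diffQuot]

lemma toReal_semiSq (hu : Measurable u) : (semiSq N s Ω u).toReal = bform N s Ω u u := by
  simp only [bform_eq_integral_diffQuot, semiSq_eq_lintegral_diffQuot_sq, ← sq]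
  exact (integral_eq_lintegral_of_nonneg_ae (ae_of_all _ fun _ => sq_nonneg _)
    ((measurable_diffQuot hu).pow_const 2).aestronglyMeasurable).symm

lemma memHs_iff : memHs N s Ω u ↔ Measurable u ∧ MemLp u 2 (volume.restrict Ω) ∧
    MemLp (diffQuot s u) 2 (volume.restrict (reg N Ω)) := by
  refine and_congr_right fun hu => ?_
  rw [memLp_two_iff_lintegral_ofReal_sq_lt_top hu.aestronglyMeasurable,
    memLp_two_iff_lintegral_ofReal_sq_lt_top (measurable_diffQuot hu).aestronglyMeasurable,
    ← semiSq_eq_lintegral_diffQuot_sq, l2sq]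

lemma memHs_zero : memHs N s Ω 0 :=
  memHs_iff.2 ⟨measurable_zero, MemLp.zero, diffQuot_zero (N := N) ▸ MemLp.zero⟩

lemma memHs.add (hu : memHs N s Ω u) (hv : memHs N s Ω v) : memHs N s Ω (u + v) := by
  rw [memHs_iff] at hu hv ⊢
  exact ⟨hu.1.add hv.1, hu.2.1.add hv.2.1, diffQuot_add (u := u) ▸ hu.2.2.add hv.2.2⟩

lemma memHs.const_smul (hu : memHs N s Ω u) (c : ℝ) : memHs N s Ω (c • u) := by
  rw [memHs_iff] at hu ⊢
  exact ⟨hu.1.const_smul c, hu.2.1.const_smul c, diffQuot_smul (u := u) c ▸ hu.2.2.const_smul c⟩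

lemma memHs.integrable_mul (hu : memHs N s Ω u) (hv : memHs N s Ω v) :
    Integrable (fun x => u x * v x) (volume.restrict Ω) :=
  (memHs_iff.1 hu).2.1.integrable_mul (memHs_iff.1 hv).2.1

lemma bform_zero_left : bform N s Ω 0 v = 0 := by
  simp [bform_eq_integral_diffQuot, diffQuot_zero]

lemma bform_add_left (hu : memHs N s Ω u) (hv : memHs N s Ω v) (hw : memHs N s Ω w) :
    bform N s Ω (u + v) w = bform N s Ω u w + bform N s Ω v w := by
  rw [memHs_iff] at hu hv hw
  simp only [bform_eq_integral_diffQuot, diffQuot_add, Pi.add_apply, add_mul]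
  exact integral_add (hu.2.2.integrable_mul hw.2.2) (hv.2.2.integrable_mul hw.2.2)

lemma bform_smul_left (c : ℝ) : bform N s Ω (c • u) v = c * bform N s Ω u v := by
  simp only [bform_eq_integral_diffQuot, diffQuot_smul, Pi.smul_apply, smul_eq_mul, mul_assoc,
    integral_const_mul]

lemma bform_comm : bform N s Ω u v = bform N s Ω v u := by
  simp only [bform, mul_comm]

/-- The space of weak solutions of the eigenvalue problem for `μ₁`: the first nontrivial
eigenfunctions, without the requirements of being nonzero and of having zero mean. -/
def firstEigenspace (N : ℕ) (s : ℝ) (Ω : Set (Euc N)) : Submodule ℝ (Euc N → ℝ) where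
  carrier := {u | memHs N s Ω u ∧ ∀ v, memHs N s Ω v →
    cNs N s / 2 * bform N s Ω u v = mu1 N s Ω * ∫ x in Ω, u x * v x}
  zero_mem' := ⟨memHs_zero, fun v _ => by simp [bform_zero_left]⟩
  add_mem' := by
    rintro u v ⟨hu, hu_eq⟩ ⟨hv, hv_eq⟩
    refine ⟨hu.add hv, fun w hw => ?_⟩
    simp only [bform_add_left hu hv hw, Pi.add_apply, add_mul,
      integral_add (hu.integrable_mul hw) (hv.integrable_mul hw), mul_add, hu_eq w hw, hv_eq w hw]
  smul_mem' := by
    rintro c u ⟨hu, hu_eq⟩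
    refine ⟨hu.const_smul c, fun w hw => ?_⟩
    simp only [bform_smul_left, Pi.smul_apply, smul_eq_mul, mul_assoc, integral_const_mul]
    rw [mul_left_comm, hu_eq w hw, mul_left_comm]

lemma IsFirstEigen.mem_firstEigenspace (hu : IsFirstEigen N s Ω u) : u ∈ firstEigenspace N s Ω :=
  ⟨hu.1, hu.2.2.2⟩

lemma energy_eq_of_mem_firstEigenspace (hu : u ∈ firstEigenspace N s Ω) :
    cNs N s / 2 * (semiSq N s Ω u).toReal = mu1 N s Ω * ∫ x in Ω, u x ^ 2 := by
  simpa only [toReal_semiSq hu.1.1, sq] using hu.2 u hu.1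

lemma mu1_mul_integral_sq_le_energy (hs : s ∈ Ioo (0 : ℝ) 1) (hu : memHs N s Ω u)
    (hmean : ∫ x in Ω, u x = 0) :
    mu1 N s Ω * ∫ x in Ω, u x ^ 2 ≤ cNs N s / 2 * (semiSq N s Ω u).toReal := by
  have hc := cNs_pos N hs
  set A := ∫ x in Ω, u x ^ 2
  obtain hA | hA : 0 = A ∨ 0 < A := (integral_nonneg fun _ => sq_nonneg _).eq_or_lt
  · rw [← hA, mul_zero]
    positivity
  have hk : (√A)⁻¹ ^ 2 = A⁻¹ := by rw [inv_pow, Real.sq_sqrt hA.le]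
  set k := (√A)⁻¹
  have hku := hu.const_smul k
  have hnorm : ∫ x in Ω, (k • u) x ^ 2 = 1 := by
    simp only [Pi.smul_apply, smul_eq_mul, mul_pow, integral_const_mul, hk]
    exact inv_mul_cancel₀ hA.ne'
  have hkmean : ∫ x in Ω, (k • u) x = 0 := by
    simp only [Pi.smul_apply, smul_eq_mul, integral_const_mul, hmean, mul_zero]
  have hle : mu1 N s Ω ≤ cNs N s / 2 * (semiSq N s Ω (k • u)).toReal := by
    refine csInf_le ⟨0, ?_⟩ ⟨k • u, hku, hnorm, hkmean, rfl⟩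
    rintro _ ⟨z, -, -, -, rfl⟩
    positivity
  have hscale : (semiSq N s Ω (k • u)).toReal = A⁻¹ * (semiSq N s Ω u).toReal := by
    rw [toReal_semiSq hku.1, toReal_semiSq hu.1, bform_smul_left, bform_comm, bform_smul_left,
      ← mul_assoc, ← sq, hk]
  calc mu1 N s Ω * A ≤ cNs N s / 2 * (A⁻¹ * (semiSq N s Ω u).toReal) * A := by
        rw [← hscale]; gcongr
    _ = cNs N s / 2 * (semiSq N s Ω u).toReal := by field_simp

end Energy

section Reflection

variable {N : ℕ} {e : Euc N} {Ω : Set (Euc N)}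

lemma reflect_eq_reflection (he : ‖e‖ = 1) : reflect N e = (ℝ ∙ e)ᗮ.reflection := by
  ext1 x
  rw [Submodule.reflection_orthogonal_apply, Submodule.reflection_singleton_apply, he,
    real_inner_comm, reflect]
  simp [mul_smul, two_smul]

lemma reflect_reflect (he : ‖e‖ = 1) (x : Euc N) : reflect N e (reflect N e x) = x := by
  simp [reflect_eq_reflection he]

lemma norm_reflect (he : ‖e‖ = 1) (x : Euc N) : ‖reflect N e x‖ = ‖x‖ := by
  simp [reflect_eq_reflection he]

lemma continuous_reflect (e : Euc N) : Continuous (reflect N e) := by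
  unfold reflect
  fun_prop

lemma measurePreserving_reflect (he : ‖e‖ = 1) : MeasurePreserving (reflect N e) :=
  reflect_eq_reflection he ▸ LinearIsometryEquiv.measurePreserving _

lemma measurableEmbedding_reflect (he : ‖e‖ = 1) : MeasurableEmbedding (reflect N e) :=
  reflect_eq_reflection he ▸ (ℝ ∙ e)ᗮ.reflection.toHomeomorph.measurableEmbedding

lemma inner_reflect (he : ‖e‖ = 1) (x : Euc N) : inner ℝ (reflect N e x) e = -inner ℝ x e := by
  rw [reflect, inner_sub_left, real_inner_smul_left, real_inner_self_eq_norm_sq, he]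
  ring

lemma reflect_of_inner_eq_zero {x : Euc N} (hx : inner ℝ x e = 0) : reflect N e x = x := by
  simp [reflect, hx]

lemma norm_sub_reflect_sq (he : ‖e‖ = 1) (x y : Euc N) :
    ‖x - reflect N e y‖ ^ 2 = ‖x - y‖ ^ 2 + 4 * (inner ℝ x e * inner ℝ y e) := by
  rw [reflect, sub_sub_eq_add_sub, add_sub_right_comm, norm_add_sq_real, norm_smul, he,
    real_inner_smul_right, inner_sub_left, mul_one, Real.norm_eq_abs, sq_abs]
  ring

lemma reflect_mem_iff (he : ‖e‖ = 1) (hΩ : MapsTo (reflect N e) Ω Ω) (x : Euc N) :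
    reflect N e x ∈ Ω ↔ x ∈ Ω :=
  ⟨fun hx => reflect_reflect he x ▸ hΩ hx, fun hx => hΩ hx⟩

lemma mapsTo_reflect_ball (he : ‖e‖ = 1) (R : ℝ) :
    MapsTo (reflect N e) (Metric.ball 0 R) (Metric.ball 0 R) := fun x hx => by
  simpa only [mem_ball_zero_iff, norm_reflect he] using hx

/-- Antisymmetry of `w` with respect to the hyperplane `{x·e = 0}`. -/
def IsAntisymmetric (e : Euc N) (w : Euc N → ℝ) : Prop := ∀ x, w (reflect N e x) = -w x

namespace IsAntisymmetric

variable {u v w : Euc N → ℝ}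

lemma zero : IsAntisymmetric e 0 := fun _ => neg_zero.symm

lemma sub (hu : IsAntisymmetric e u) (hv : IsAntisymmetric e v) :
    IsAntisymmetric e (u - v) := fun x => by
  simp only [Pi.sub_apply, hu x, hv x, neg_sub_neg, neg_sub]

lemma const_smul (hu : IsAntisymmetric e u) (c : ℝ) : IsAntisymmetric e (c • u) := fun x => by
  simp only [Pi.smul_apply, hu x, smul_neg]

lemma eq_zero_of_inner_eq_zero (hw : IsAntisymmetric e w) {x : Euc N} (hx : inner ℝ x e = 0) :
    w x = 0 :=
  self_eq_neg.1 (by rw [← hw x, reflect_of_inner_eq_zero hx])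

lemma eqOn_of_eqOn_half (he : ‖e‖ = 1) (hΩ : MapsTo (reflect N e) Ω Ω)
    (hu : IsAntisymmetric e u) (hv : IsAntisymmetric e v)
    (h : ∀ x ∈ Ω, 0 < inner ℝ x e → u x = v x) : EqOn u v Ω := by
  intro x hx
  rcases lt_trichotomy (inner ℝ x e) 0 with hneg | hzero | hpos
  · have hrefl := h _ (hΩ hx) (by rw [inner_reflect he]; exact neg_pos.2 hneg)
    rwa [hu, hv, neg_inj] at hrefl
  · rw [hu.eq_zero_of_inner_eq_zero hzero, hv.eq_zero_of_inner_eq_zero hzero]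
  · exact h x hx hpos

lemma setIntegral_eq_zero (he : ‖e‖ = 1) (hΩ : MapsTo (reflect N e) Ω Ω)
    (hw : IsAntisymmetric e w) : ∫ x in Ω, w x = 0 := by
  have hpre : reflect N e ⁻¹' Ω = Ω := ext (reflect_mem_iff he hΩ)
  have hchange := (measurePreserving_reflect he).setIntegral_preimage_emb
    (measurableEmbedding_reflect he) w Ω
  simp only [hpre, hw _, integral_neg] at hchange
  exact self_eq_neg.1 hchange.symm

lemma polarize_eq (hw : IsAntisymmetric e w) (x : Euc N) :
    polarize N e w x = -(SignType.sign (inner ℝ x e : ℝ) * |w x|) := by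
  have hmin : min (w x) (-w x) = -|w x| := by rw [abs, ← min_neg_neg, neg_neg, min_comm]
  have hmax : max (w x) (-w x) = |w x| := rfl
  rcases lt_trichotomy (inner ℝ x e) 0 with hneg | hzero | hpos
  · simp [polarize, hw x, hmax, hneg, hneg.not_ge]
  · simp [polarize, hw x, hzero, hw.eq_zero_of_inner_eq_zero hzero]
  · simp [polarize, hw x, hmin, hpos, hpos.le]

lemma polarize_mul_polarize (hw : IsAntisymmetric e w) (x y : Euc N) :
    polarize N e w x * polarize N e w y =
      SignType.sign (inner ℝ x e * inner ℝ y e : ℝ) * |w x * w y| := by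
  rw [hw.polarize_eq, hw.polarize_eq, sign_mul, SignType.coe_mul, abs_mul]
  ring

lemma polarize_sq (hw : IsAntisymmetric e w) (x : Euc N) : polarize N e w x ^ 2 = w x ^ 2 := by
  obtain hzero | hne := eq_or_ne (inner ℝ x e : ℝ) 0
  · simp [hw.polarize_eq, hzero, hw.eq_zero_of_inner_eq_zero hzero]
  · rw [sq, hw.polarize_mul_polarize, sign_pos (mul_self_pos.2 hne), SignType.coe_one, one_mul,
      abs_mul_self, sq]

lemma polarize (he : ‖e‖ = 1) (hw : IsAntisymmetric e w) :
    IsAntisymmetric e (polarize N e w) := fun x => by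
  rw [hw.polarize_eq, hw.polarize_eq, hw x, inner_reflect he, Left.sign_neg, SignType.coe_neg,
    abs_neg, neg_mul]

end IsAntisymmetric

lemma measurable_polarize {w : Euc N → ℝ} (hw : Measurable w) :
    Measurable (polarize N e w) := by
  have hwσ : Measurable fun x => w (reflect N e x) := hw.comp (continuous_reflect e).measurable
  exact Measurable.ite (measurableSet_le measurable_const (by fun_prop)) (hw.min hwσ) (hw.max hwσ)

end Reflection

section Polarization

variable {N : ℕ} {s : ℝ} {e : Euc N} {Ω : Set (Euc N)} {w : Euc N → ℝ}

/-- The energy density of `w` averaged (up to a factor `2`) over the reflection of the second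
variable. It allows the energies of `w` and of its polarization to be compared pointwise. -/
def foldedDensity (s : ℝ) (e : Euc N) (w : Euc N → ℝ) (q : Euc N × Euc N) : ℝ :=
  diffQuot s w q ^ 2 + diffQuot s w (q.1, reflect N e q.2) ^ 2

lemma foldedDensity_nonneg (q : Euc N × Euc N) : 0 ≤ foldedDensity s e w q :=
  add_nonneg (sq_nonneg _) (sq_nonneg _)

lemma measurable_foldedDensity (hw : Measurable w) : Measurable (foldedDensity s e w) := by
  have hσ : Measurable fun q : Euc N × Euc N => (q.1, reflect N e q.2) :=
    measurable_fst.prodMk ((continuous_reflect e).measurable.comp measurable_snd)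
  exact ((measurable_diffQuot hw).pow_const 2).add
    (((measurable_diffQuot hw).comp hσ).pow_const 2)

lemma two_mul_semiSq (he : ‖e‖ = 1) (hΩ : MapsTo (reflect N e) Ω Ω) (hw : Measurable w) :
    2 * semiSq N s Ω w = ∫⁻ q in reg N Ω, ENNReal.ofReal (foldedDensity s e w q) := by
  have hσ : MeasurePreserving (Prod.map id (reflect N e))
      (volume : Measure (Euc N × Euc N)) volume :=
    (MeasurePreserving.id volume).prod (measurePreserving_reflect he)
  have hpre : Prod.map id (reflect N e) ⁻¹' reg N Ω = reg N Ω := by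
    ext q
    simp only [reg, mem_preimage, mem_ofPred_eq, Prod.map_fst, Prod.map_snd, id,
      reflect_mem_iff he (hΩ.closure (continuous_reflect e))]
  have hmeas : Measurable fun q => ENNReal.ofReal (diffQuot s w q ^ 2) :=
    ((measurable_diffQuot hw).pow_const 2).ennreal_ofReal
  have hchange : ∫⁻ q in reg N Ω, ENNReal.ofReal (diffQuot s w (q.1, reflect N e q.2) ^ 2) =
      semiSq N s Ω w := by
    rw [semiSq_eq_lintegral_diffQuot_sq, ← hσ.setLIntegral_comp_preimage measurableSet_reg hmeas,
      hpre]
    rfl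
  simp only [foldedDensity, ENNReal.ofReal_add (sq_nonneg _) (sq_nonneg _)]
  rw [lintegral_add_left hmeas, hchange, ← semiSq_eq_lintegral_diffQuot_sq, two_mul]

lemma sign_inv_kern_sub_inv_kern_reflect (hs : 0 < s) (he : ‖e‖ = 1) {x y : Euc N} (hxy : x ≠ y)
    (hxy' : x ≠ reflect N e y) :
    SignType.sign ((kern N s x y)⁻¹ - (kern N s x (reflect N e y))⁻¹) =
      SignType.sign (inner ℝ x e * inner ℝ y e : ℝ) := by
  have hk : 0 < kern N s x y := kern_pos hxy
  have hk' : 0 < kern N s x (reflect N e y) := kern_pos hxy'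
  have hlt : kern N s x y < kern N s x (reflect N e y) ↔ 0 < (inner ℝ x e * inner ℝ y e : ℝ) := by
    rw [kern_lt_kern_iff hs, norm_sub_reflect_sq he]
    constructor <;> intro <;> linarith
  have hgt : kern N s x (reflect N e y) < kern N s x y ↔ (inner ℝ x e * inner ℝ y e : ℝ) < 0 := by
    rw [kern_lt_kern_iff hs, norm_sub_reflect_sq he]
    constructor <;> intro <;> linarith
  simp only [sign_apply, sub_pos, sub_neg, inv_lt_inv₀ hk hk', inv_lt_inv₀ hk' hk, hlt, hgt]

lemma IsAntisymmetric.foldedDensity_eq (hw : IsAntisymmetric e w) (x y : Euc N) :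
    foldedDensity s e w (x, y) =
      (w x ^ 2 + w y ^ 2) * ((kern N s x y)⁻¹ + (kern N s x (reflect N e y))⁻¹) -
        2 * (w x * w y) * ((kern N s x y)⁻¹ - (kern N s x (reflect N e y))⁻¹) := by
  simp only [foldedDensity, diffQuot_sq, hw y, div_eq_mul_inv]
  ring

lemma foldedDensity_sub_foldedDensity_polarize (he : ‖e‖ = 1) (hw : IsAntisymmetric e w)
    (x y : Euc N) :
    foldedDensity s e w (x, y) - foldedDensity s e (polarize N e w) (x, y) =
      2 * ((polarize N e w x * polarize N e w y - w x * w y) *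
        ((kern N s x y)⁻¹ - (kern N s x (reflect N e y))⁻¹)) := by
  rw [hw.foldedDensity_eq, (hw.polarize he).foldedDensity_eq, hw.polarize_sq, hw.polarize_sq]
  ring

lemma foldedDensity_polarize_le (hs : 0 < s) (he : ‖e‖ = 1) (hw : IsAntisymmetric e w)
    (q : Euc N × Euc N) : foldedDensity s e (polarize N e w) q ≤ foldedDensity s e w q := by
  obtain ⟨x, y⟩ := q
  rw [← sub_nonneg, foldedDensity_sub_foldedDensity_polarize he hw]
  refine mul_nonneg two_pos.le ?_
  -- The inverse kernels are not ordered where one of them has the junk value `0⁻¹ = 0`.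
  obtain rfl | hxy := eq_or_ne x y
  · rw [← sq, ← sq, hw.polarize_sq, sub_self, zero_mul]
  obtain rfl | hxy' := eq_or_ne x (reflect N e y)
  · rw [hw.polarize he y, hw y, neg_mul, neg_mul, ← sq, ← sq, hw.polarize_sq, sub_self, zero_mul]
  rw [hw.polarize_mul_polarize, ← sign_inv_kern_sub_inv_kern_reflect hs he hxy hxy']
  set d := (kern N s x y)⁻¹ - (kern N s x (reflect N e y))⁻¹
  calc (0 : ℝ) ≤ |w x * w y * d| - w x * w y * d := sub_nonneg.2 (le_abs_self _)
    _ = (SignType.sign d * |w x * w y| - w x * w y) * d := by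
      rw [abs_mul, ← sign_mul_self d]
      ring

lemma foldedDensity_polarize_lt (hs : 0 < s) (he : ‖e‖ = 1) (hw : IsAntisymmetric e w)
    {x y : Euc N} (hx : 0 < inner ℝ x e) (hy : 0 < inner ℝ y e) (hxy : w x * w y < 0) :
    foldedDensity s e (polarize N e w) (x, y) < foldedDensity s e w (x, y) := by
  have hne : x ≠ y := by
    rintro rfl
    exact hxy.not_ge (mul_self_nonneg _)
  have hne' : x ≠ reflect N e y := by
    rintro rfl
    rw [inner_reflect he] at hx
    linarith
  have hpos : 0 < inner ℝ x e * inner ℝ y e := mul_pos hx hy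
  have hkern : 0 < (kern N s x y)⁻¹ - (kern N s x (reflect N e y))⁻¹ := by
    rwa [← sign_eq_one_iff, sign_inv_kern_sub_inv_kern_reflect hs he hne hne', sign_eq_one_iff]
  rw [← sub_pos, foldedDensity_sub_foldedDensity_polarize he hw, hw.polarize_mul_polarize,
    sign_pos hpos, SignType.coe_one, one_mul]
  exact mul_pos two_pos (mul_pos (sub_pos.2 (hxy.trans_le (abs_nonneg _))) hkern)

lemma semiSq_polarize_le (hs : 0 < s) (he : ‖e‖ = 1) (hΩ : MapsTo (reflect N e) Ω Ω)
    (hw : IsAntisymmetric e w) (hmeas : Measurable w) :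
    semiSq N s Ω (polarize N e w) ≤ semiSq N s Ω w := by
  rw [← ENNReal.mul_le_mul_iff_right two_ne_zero ENNReal.ofNat_ne_top, two_mul_semiSq he hΩ hmeas,
    two_mul_semiSq he hΩ (measurable_polarize hmeas)]
  exact lintegral_mono fun q => ENNReal.ofReal_le_ofReal (foldedDensity_polarize_le hs he hw q)

lemma foldedDensity_polarize_ae_eq (hs : 0 < s) (he : ‖e‖ = 1) (hΩ : MapsTo (reflect N e) Ω Ω)
    (hw : IsAntisymmetric e w) (hmeas : Measurable w) (hfin : semiSq N s Ω (polarize N e w) ≠ ⊤)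
    (hle : semiSq N s Ω w ≤ semiSq N s Ω (polarize N e w)) :
    foldedDensity s e (polarize N e w) =ᵐ[volume.restrict (reg N Ω)] foldedDensity s e w := by
  have hofReal := ae_eq_of_ae_le_of_lintegral_le (μ := volume.restrict (reg N Ω))
    (ae_of_all _ fun q => ENNReal.ofReal_le_ofReal (foldedDensity_polarize_le hs he hw q))
    (by rw [← two_mul_semiSq he hΩ (measurable_polarize hmeas)]
        exact ENNReal.mul_ne_top ENNReal.ofNat_ne_top hfin)
    (measurable_foldedDensity hmeas).ennreal_ofReal.aemeasurable
    (by rw [← two_mul_semiSq he hΩ hmeas, ← two_mul_semiSq he hΩ (measurable_polarize hmeas)]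
        gcongr)
  filter_upwards [hofReal] with q hq
  exact (ENNReal.ofReal_eq_ofReal_iff (foldedDensity_nonneg q) (foldedDensity_nonneg q)).1 hq

lemma mul_nonneg_of_semiSq_le_semiSq_polarize (hs : 0 < s) (he : ‖e‖ = 1) (hΩo : IsOpen Ω)
    (hΩ : MapsTo (reflect N e) Ω Ω) (hw : IsAntisymmetric e w) (hcont : Continuous w)
    (hfin : semiSq N s Ω (polarize N e w) ≠ ⊤)
    (hle : semiSq N s Ω w ≤ semiSq N s Ω (polarize N e w)) {x y : Euc N} (hxΩ : x ∈ Ω)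
    (hx : 0 < inner ℝ x e) (hy : 0 < inner ℝ y e) : 0 ≤ w x * w y := by
  by_contra! hxy
  let U : Set (Euc N × Euc N) :=
    {q | q.1 ∈ Ω ∧ 0 < inner ℝ q.1 e ∧ 0 < inner ℝ q.2 e ∧ w q.1 * w q.2 < 0}
  have hhalf : IsOpen {z : Euc N | 0 < inner ℝ z e} := isOpen_lt continuous_const (by fun_prop)
  have hU : IsOpen U :=
    (hΩo.preimage continuous_fst).inter <| (hhalf.preimage continuous_fst).inter <|
      (hhalf.preimage continuous_snd).inter <|
        isOpen_lt (hcont.fst'.mul hcont.snd') continuous_const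
  have hae := foldedDensity_polarize_ae_eq hs he hΩ hw hcont.measurable hfin hle
  have hU_null : volume U = 0 := by
    rw [Filter.EventuallyEq, ae_restrict_iff' measurableSet_reg] at hae
    refine measure_eq_zero_iff_ae_notMem.2 (hae.mono ?_)
    rintro ⟨a, b⟩ hab ⟨haΩ, ha, hb, hneg⟩
    exact (foldedDensity_polarize_lt hs he hw ha hb hneg).ne (hab (Or.inl (subset_closure haΩ)))
  exact (hU.measure_pos volume ⟨(x, y), hxΩ, hx, hy, hxy⟩).ne' hU_null

lemma memHs.polarize (hs : 0 < s) (he : ‖e‖ = 1) (hΩ : MapsTo (reflect N e) Ω Ω)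
    (hw : IsAntisymmetric e w) (hmem : memHs N s Ω w) : memHs N s Ω (polarize N e w) := by
  refine ⟨measurable_polarize hmem.1, ?_, (semiSq_polarize_le hs he hΩ hw hmem.1).trans_lt hmem.2.2⟩
  simpa only [l2sq, hw.polarize_sq] using hmem.2.1

lemma semiSq_le_semiSq_polarize_of_mem_firstEigenspace (hs : s ∈ Ioo (0 : ℝ) 1) (he : ‖e‖ = 1)
    (hΩ : MapsTo (reflect N e) Ω Ω) (hw : IsAntisymmetric e w)
    (hmem : w ∈ firstEigenspace N s Ω) : semiSq N s Ω w ≤ semiSq N s Ω (polarize N e w) := by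
  have hpol := hmem.1.polarize hs.1 he hΩ hw
  have henergy : cNs N s / 2 * (semiSq N s Ω w).toReal ≤
      cNs N s / 2 * (semiSq N s Ω (polarize N e w)).toReal := by
    calc cNs N s / 2 * (semiSq N s Ω w).toReal
        = mu1 N s Ω * ∫ x in Ω, polarize N e w x ^ 2 := by
          simp only [energy_eq_of_mem_firstEigenspace hmem, hw.polarize_sq]
      _ ≤ _ := mu1_mul_integral_sq_le_energy hs hpol ((hw.polarize he).setIntegral_eq_zero he hΩ)
  rw [← ENNReal.toReal_le_toReal hmem.1.2.2.ne hpol.2.2.ne]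
  exact le_of_mul_le_mul_left henergy (half_pos (cNs_pos N hs))

lemma mul_nonneg_of_mem_firstEigenspace (hs : s ∈ Ioo (0 : ℝ) 1) (he : ‖e‖ = 1) (hΩo : IsOpen Ω)
    (hΩ : MapsTo (reflect N e) Ω Ω) (hw : IsAntisymmetric e w) (hcont : Continuous w)
    (hmem : w ∈ firstEigenspace N s Ω) {x y : Euc N} (hxΩ : x ∈ Ω) (hx : 0 < inner ℝ x e)
    (hy : 0 < inner ℝ y e) : 0 ≤ w x * w y :=
  mul_nonneg_of_semiSq_le_semiSq_polarize hs.1 he hΩo hΩ hw hcont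
    (hmem.1.polarize hs.1 he hΩ hw).2.2.ne
    (semiSq_le_semiSq_polarize_of_mem_firstEigenspace hs he hΩ hw hmem) hxΩ hx hy

lemma IsFirstEigen.exists_ne_zero_half (he : ‖e‖ = 1) (hΩo : IsOpen Ω)
    (hΩ : MapsTo (reflect N e) Ω Ω) (hw : IsAntisymmetric e w) (hfirst : IsFirstEigen N s Ω w) :
    ∃ x ∈ Ω, 0 < inner ℝ x e ∧ w x ≠ 0 := by
  by_contra! hzero
  have hzeroΩ : EqOn w 0 Ω := hw.eqOn_of_eqOn_half he hΩ .zero hzero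
  exact hfirst.2.1 (hzeroΩ.aeEq_restrict hΩo.measurableSet)

theorem statement17_general (hs : s ∈ Ioo (0 : ℝ) 1) (he : ‖e‖ = 1) (hΩo : IsOpen Ω)
    (hΩ : MapsTo (reflect N e) Ω Ω) {u v : Euc N → ℝ}
    (hu : IsFirstEigen N s Ω u) (hcu : Continuous u) (hv : IsFirstEigen N s Ω v)
    (hcv : Continuous v) (hau : IsAntisymmetric e u) (hav : IsAntisymmetric e v) :
    ∃ c : ℝ, c ≠ 0 ∧ ∀ x, v x = c * u x := by
  obtain ⟨x₀, hx₀Ω, hx₀, hux₀⟩ := hu.exists_ne_zero_half he hΩo hΩ hau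
  have hsign (c : ℝ) {y : Euc N} (hy : 0 < inner ℝ y e) :
      0 ≤ (v x₀ - c * u x₀) * (v y - c * u y) :=
    mul_nonneg_of_mem_firstEigenspace hs he hΩo hΩ (hav.sub (hau.const_smul c))
      (hcv.sub (hcu.const_smul c)) (sub_mem hv.mem_firstEigenspace
        (Submodule.smul_mem _ c hu.mem_firstEigenspace)) hx₀Ω hx₀ hy
  have hhalf (y : Euc N) (hy : 0 < inner ℝ y e) : v y = v x₀ / u x₀ * u y := by
    rw [div_mul_eq_mul_div, eq_div_iff hux₀,
      mul_eq_mul_of_forall_sub_mul_nonneg fun c => hsign c hy, mul_comm]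
  have hvu (x : Euc N) : v x = v x₀ / u x₀ * u x :=
    hav.eqOn_of_eqOn_half he (mapsTo_univ _ _) (v := (v x₀ / u x₀) • u)
      (hau.const_smul _) (fun y _ => hhalf y) (mem_univ x)
  refine ⟨v x₀ / u x₀, fun hc => hv.2.1 (ae_of_all _ fun x => ?_), hvu⟩
  rw [hvu, hc, zero_mul, Pi.zero_apply]

end Polarization

/-- Proposition 4.6: for any unit direction `e`, there is at most one
(modulo scaling) first nontrivial eigenfunction in a ball antisymmetric w.r.t. `{x·e = 0}`. -/
theorem statement17 (N : ℕ) (hN : 2 ≤ N) (s : ℝ) (hs : s ∈ Set.Ioo (0 : ℝ) 1)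
    (R : ℝ) (hR : 0 < R) (B : Set (Euc N)) (hB : B = Metric.ball (0 : Euc N) R)
    (e : Euc N) (he : ‖e‖ = 1)
    (u v : Euc N → ℝ)
    (hu : IsFirstEigen N s B u) (hcu : Continuous u)
    (hv : IsFirstEigen N s B v) (hcv : Continuous v)
    (hau : ∀ x : Euc N, u (reflect N e x) = - u x)
    (hav : ∀ x : Euc N, v (reflect N e x) = - v x) :
    ∃ c : ℝ, c ≠ 0 ∧ ∀ x : Euc N, v x = c * u x := by
  subst hB
  exact statement17_general hs he Metric.isOpen_ball (mapsTo_reflect_ball he R) hu hcu hv hcv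
    hau hav

end FracNeumann
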